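/- Let X ⊆ P² be a k-configuration of type (d₁,…,d_s) with s ≥ 2. Then there exist subsets X'₁,…,X'_s and lines L'₁,…,L'_s defining X as a k-configuration of type (d₁,…,d_s), together with an integer r ≥ 0, such that |L'_{s−j} ∩ X| = d_s for all 0 ≤ j ≤ r−1 and |L'_{s−j} ∩ X| < d_s for all r ≤ j ≤ s−1. -/

import Mathlib

/-- The projective plane over a field `K`, as the projectivization of `K³`. -/
abbrev P2 (K : Type) [Field K] := Projectivization K (Fin 3 → K)

/-- A line in `P2 K`: a 2-dimensional linear subspace of `K³`. -/
structure ProjLine (K : Type) [Field K] where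
  toSubmodule : Submodule K (Fin 3 → K)
  finrank_eq_two : Module.finrank K toSubmodule = 2

/-- The set of points of `P2 K` lying on a line. -/
def ProjLine.points {K : Type} [Field K] (L : ProjLine K) : Set (P2 K) :=
  {p | p.submodule ≤ L.toSubmodule}

/-- The homogeneous prime ideal of a point of `P2 K`: the ideal generated by
the linear forms vanishing at the point. -/
noncomputable def pointIdeal {K : Type} [Field K] (p : P2 K) :
    Ideal (MvPolynomial (Fin 3) K) :=
  Ideal.span {f | f.IsHomogeneous 1 ∧ MvPolynomial.eval p.rep f = 0}

/-- The defining ideal `I_{mX} = ⋂_{P ∈ X} I_P^m` of the fat point scheme `mX`. -/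
noncomputable def fatIdeal {K : Type} [Field K] (X : Set (P2 K)) (m : ℕ) :
    Ideal (MvPolynomial (Fin 3) K) :=
  ⨅ p ∈ X, (pointIdeal p) ^ m

/-- The Hilbert function of `R/I`: `H(t) = dim_K R_t - dim_K I_t`. -/
noncomputable def hilb {K : Type} [Field K] (I : Ideal (MvPolynomial (Fin 3) K)) (t : ℕ) : ℕ :=
  Module.finrank K ↥(MvPolynomial.homogeneousSubmodule (Fin 3) K t) -
    Module.finrank K ↥(Submodule.restrictScalars K (I : Submodule (MvPolynomial (Fin 3) K) (MvPolynomial (Fin 3) K)) ⊓ MvPolynomial.homogeneousSubmodule (Fin 3) K t)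

/-- The Hilbert function extended to `ℤ`, with `H(t) = 0` for `t < 0`. -/
noncomputable def hilbZ {K : Type} [Field K] (I : Ideal (MvPolynomial (Fin 3) K)) (t : ℤ) : ℤ :=
  if t < 0 then 0 else hilb I t.toNat

/-- The first difference `ΔH(t) = H(t) - H(t-1)` of the Hilbert function. -/
noncomputable def deltaHilb {K : Type} [Field K] (I : Ideal (MvPolynomial (Fin 3) K)) (t : ℤ) : ℤ :=
  hilbZ I t - hilbZ I (t - 1)

/-- `X` is a k-configuration of type `(d 0, …, d (s-1))` defined using the subsets
`Xs 0, …, Xs (s-1)` and the (distinct) lines `Ls 0, …, Ls (s-1)`. -/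
structure IsKConfig {K : Type} [Field K] {s : ℕ} (X : Set (P2 K)) (d : Fin s → ℕ)
    (Xs : Fin s → Set (P2 K)) (Ls : Fin s → ProjLine K) : Prop where
  one_le : ∀ i, 1 ≤ d i
  strictMono : StrictMono d
  lines_distinct : Function.Injective Ls
  union_eq : X = ⋃ i, Xs i
  card_eq : ∀ i, (Xs i).ncard = d i
  subset_line : ∀ i, Xs i ⊆ (Ls i).points
  not_mem : ∀ i j : Fin s, j < i → ∀ p ∈ Xs j, p ∉ (Ls i).points

/-!
Each line `Lᵢ` meets `X` in the `dᵢ` points of `Xᵢ` and in at most one point of each later `Xⱼ`, so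
in at most `dᵢ + (s - i) ≤ d_s` points. If `Lᵢ` is full, i.e. contains `d_s` points of `X`, equality
holds throughout: `Lᵢ` meets every later `Xⱼ` in exactly one point and `dᵢ₊₁ = dᵢ + 1`. One may then
exchange `Lᵢ` and `Lᵢ₊₁`, transferring the point of `Xᵢ₊₁ ∩ Lᵢ` from `Xᵢ₊₁` to `Xᵢ`. Since adjacent
exchanges suffice to sort, all full lines can be moved to the end.
-/

section Order

theorem add_card_Ioi_le_of_strictMono {ι : Type*} [LinearOrder ι] [OrderTop ι]
    [LocallyFiniteOrderTop ι] {d : ι → ℕ} (hd : StrictMono d) (i : ι) :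
    d i + (Finset.Ioi i).card ≤ d ⊤ := by
  have hmaps : Set.MapsTo d (Finset.Ioi i) (Finset.Ioc (d i) (d ⊤)) := fun j hj ↦
    Finset.mem_Ioc.2 ⟨hd (Finset.mem_Ioi.1 hj), hd.monotone le_top⟩
  have hcard := Finset.card_le_card_of_injOn d hmaps hd.injective.injOn
  rw [Nat.card_Ioc] at hcard
  have := hd.monotone (le_top (a := i))
  omega

theorem exists_perm_monotone_comp_of_swap_covBy {ι α : Type*} [LinearOrder ι] [Finite ι]
    [LocallyFiniteOrder ι] [LinearOrder α] {f : ι → α} {P : Equiv.Perm ι → Prop} (one : P 1)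
    (mul_swap : ∀ (σ : Equiv.Perm ι) (i k : ι), i ⋖ k → f (σ k) < f (σ i) → P σ →
      P (σ * Equiv.swap i k)) :
    ∃ σ : Equiv.Perm ι, P σ ∧ Monotone (f ∘ σ) := by
  -- A lexicographically minimal admissible rearrangement has no adjacent inversion.
  obtain ⟨σ, hσ, hmin⟩ := {σ | P σ}.toFinite.exists_minimalFor
    (fun σ : Equiv.Perm ι ↦ toLex (f ∘ σ)) _ ⟨1, one⟩
  refine ⟨σ, hσ, (monotone_iff_forall_covBy _).2 fun i k hik ↦ ?_⟩
  by_contra! hlt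
  have hdesc : toLex (f ∘ ⇑(σ * Equiv.swap i k)) < toLex (f ∘ σ) := Pi.lex_desc hik.le hlt
  exact hdesc.not_ge (hmin (mul_swap σ i k hik hlt hσ) hdesc.le)

theorem exists_le_forall_iff_lt_of_antitone {n : ℕ} {p : Fin n → Prop} (hp : Antitone p) :
    ∃ r ≤ n, ∀ i : Fin n, p i ↔ i < r := by
  have hlower : IsLowerSet {i | p i} := fun _ _ hij hi ↦ hp hij hi
  rcases hlower.eq_univ_or_Iio with huniv | ⟨a, ha⟩
  · exact ⟨n, le_rfl, fun i ↦ iff_of_true (Set.eq_univ_iff_forall.1 huniv i) i.isLt⟩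
  · exact ⟨a, a.isLt.le, Set.ext_iff.1 ha⟩

theorem forall_lt_iff_of_covBy {ι : Type*} [LinearOrder ι] {i k : ι} (hik : i ⋖ k)
    {p : ι → Prop} : (∀ j, i < j → p j) ↔ p k ∧ ∀ j, k < j → p j := by
  have hlt (j : ι) : i < j ↔ k = j ∨ k < j := by rw [← le_iff_eq_or_lt, hik.lt_iff_le_right]
  simp only [hlt, or_imp, forall_and, forall_eq']

theorem lt_swap_apply_iff_of_covBy {ι : Type*} [LinearOrder ι] {i k j : ι} (hik : i ⋖ k)
    (hji : j ≠ i) (l : ι) : j < Equiv.swap i k l ↔ j < l := by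
  have hjk : j < i ↔ j < k := ⟨fun h ↦ h.trans hik.lt, fun h ↦ (hik.le_of_lt h).lt_of_ne hji⟩
  rw [Equiv.swap_apply_def]
  split_ifs <;> simp_all

end Order

section Lines

variable {K : Type} [Field K]

theorem ProjLine.toSubmodule_injective :
    Function.Injective (ProjLine.toSubmodule : ProjLine K → Submodule K (Fin 3 → K)) := by
  rintro ⟨L, _⟩ ⟨M, _⟩ rfl
  rfl

theorem ProjLine.subsingleton_points_inter_points {L M : ProjLine K} (hLM : L ≠ M) :
    (L.points ∩ M.points).Subsingleton := by
  have hle : Module.finrank K ↥(L.toSubmodule ⊓ M.toSubmodule) ≤ 1 := by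
    have hlt : L.toSubmodule ⊓ M.toSubmodule < L.toSubmodule := by
      refine inf_lt_left.2 fun hsub ↦ hLM (toSubmodule_injective ?_)
      exact Submodule.eq_of_le_of_finrank_eq hsub (L.finrank_eq_two.trans M.finrank_eq_two.symm)
    have := Submodule.finrank_lt_finrank_of_lt hlt
    rw [L.finrank_eq_two] at this
    omega
  have submodule_eq : ∀ p ∈ L.points ∩ M.points, p.submodule = L.toSubmodule ⊓ M.toSubmodule :=
    fun p hp ↦ Submodule.eq_of_le_of_finrank_le (le_inf hp.1 hp.2) (p.finrank_submodule ▸ hle)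
  exact fun p hp q hq ↦
    Projectivization.submodule_injective ((submodule_eq p hp).trans (submodule_eq q hq).symm)

end Lines

section Residual

variable {K : Type} [Field K] {s : ℕ} {X : Set (P2 K)} {Ls : Fin s → ProjLine K}

/-- The points of `X` whose last line among `Ls` is the `i`-th one. The subsets of a
k-configuration are determined by its lines in this way, see `IsKConfig.eq_residualPoints`. -/
def residualPoints (X : Set (P2 K)) (Ls : Fin s → ProjLine K) (i : Fin s) : Set (P2 K) :=
  {p ∈ X | p ∈ (Ls i).points ∧ ∀ j, i < j → p ∉ (Ls j).points}

theorem iUnion_residualPoints (hX : X ⊆ ⋃ i, (Ls i).points) : ⋃ i, residualPoints X Ls i = X := by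
  refine (Set.iUnion_subset fun i ↦ Set.sep_subset _ _).antisymm fun p hp ↦ ?_
  obtain ⟨i, hi⟩ := Set.mem_iUnion.1 (hX hp)
  obtain ⟨m, hm⟩ := {j | p ∈ (Ls j).points}.toFinite.exists_maximal ⟨i, hi⟩
  exact Set.mem_iUnion.2 ⟨m, hp, hm.prop, fun j hmj hj ↦ hm.not_gt hj hmj⟩

theorem isKConfig_residualPoints {d : Fin s → ℕ} (one_le : ∀ i, 1 ≤ d i) (strictMono : StrictMono d)
    (injective : Function.Injective Ls) (hX : X ⊆ ⋃ i, (Ls i).points)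
    (card_eq : ∀ i, (residualPoints X Ls i).ncard = d i) :
    IsKConfig X d (residualPoints X Ls) Ls where
  one_le := one_le
  strictMono := strictMono
  lines_distinct := injective
  union_eq := (iUnion_residualPoints hX).symm
  card_eq := card_eq
  subset_line _ _ hp := hp.2.1
  not_mem i _ hji _ hp := hp.2.2 i hji

variable {i k : Fin s}

theorem forall_lt_notMem_points_swap_iff (hik : i ⋖ k) {j : Fin s} (hji : j ≠ i) {p : P2 K} :
    (∀ l, j < l → p ∉ (Ls (Equiv.swap i k l)).points) ↔ ∀ l, j < l → p ∉ (Ls l).points :=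
  (Equiv.swap i k).forall_congr fun {l} ↦ by rw [lt_swap_apply_iff_of_covBy hik hji]

theorem residualPoints_comp_swap_left (hik : i ⋖ k) :
    residualPoints X (Ls ∘ Equiv.swap i k) i = residualPoints X Ls k \ (Ls i).points := by
  ext p
  simp only [residualPoints, Set.mem_sdiff, Set.mem_ofPred_eq, forall_lt_iff_of_covBy hik,
    forall_lt_notMem_points_swap_iff hik hik.lt.ne', Function.comp_apply,
    Equiv.swap_apply_left, Equiv.swap_apply_right]
  tauto

theorem residualPoints_comp_swap_right (hik : i ⋖ k) :
    residualPoints X (Ls ∘ Equiv.swap i k) k =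
      residualPoints X Ls i ∪ residualPoints X Ls k ∩ (Ls i).points := by
  ext p
  simp only [residualPoints, Set.mem_union, Set.mem_inter_iff, Set.mem_ofPred_eq,
    forall_lt_notMem_points_swap_iff hik hik.lt.ne', forall_lt_iff_of_covBy hik,
    Function.comp_apply, Equiv.swap_apply_right]
  tauto

theorem residualPoints_comp_swap_of_ne (hik : i ⋖ k) {j : Fin s} (hji : j ≠ i) (hjk : j ≠ k) :
    residualPoints X (Ls ∘ Equiv.swap i k) j = residualPoints X Ls j := by
  ext p
  simp only [residualPoints, Set.mem_ofPred_eq, forall_lt_notMem_points_swap_iff hik hji,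
    Function.comp_apply, Equiv.swap_apply_of_ne_of_ne hji hjk]

end Residual

namespace IsKConfig

variable {K : Type} [Field K] {s : ℕ} {X : Set (P2 K)} {d : Fin s → ℕ}
  {Xs : Fin s → Set (P2 K)} {Ls : Fin s → ProjLine K} {i j k : Fin s}

theorem subset (h : IsKConfig X d Xs Ls) (i : Fin s) : Xs i ⊆ X :=
  h.union_eq ▸ Set.subset_iUnion Xs i

theorem finite (h : IsKConfig X d Xs Ls) (i : Fin s) : (Xs i).Finite :=
  Set.finite_of_ncard_pos (h.card_eq i ▸ h.one_le i)

theorem subset_iUnion_points (h : IsKConfig X d Xs Ls) : X ⊆ ⋃ i, (Ls i).points :=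
  h.union_eq ▸ Set.iUnion_mono h.subset_line

theorem le_of_mem_points (h : IsKConfig X d Xs Ls) {p : P2 K} (hj : p ∈ Xs j)
    (hi : p ∈ (Ls i).points) : i ≤ j :=
  not_lt.1 fun hji ↦ h.not_mem i j hji p hj hi

theorem eq_residualPoints (h : IsKConfig X d Xs Ls) : Xs = residualPoints X Ls := by
  ext i p
  refine ⟨fun hp ↦ ⟨h.subset i hp, h.subset_line i hp, fun j hij ↦ h.not_mem j i hij p hp⟩, ?_⟩
  rintro ⟨hpX, hpi, hlast⟩
  obtain ⟨j, hj⟩ := Set.mem_iUnion.1 (h.union_eq ▸ hpX)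
  rcases (h.le_of_mem_points hj hpi).eq_or_lt with rfl | hij
  · exact hj
  · exact absurd (h.subset_line j hj) (hlast j hij)

theorem ncard_inter_points_le_one (h : IsKConfig X d Xs Ls) (hij : i ≠ j) :
    (Xs j ∩ (Ls i).points).ncard ≤ 1 := by
  have := ((h.finite j).inter_of_left (Ls i).points).to_subtype
  exact Set.ncard_le_one_iff_subsingleton.2 <|
    (ProjLine.subsingleton_points_inter_points (h.lines_distinct.ne hij.symm)).anti
      (Set.inter_subset_inter_left _ (h.subset_line j))

theorem ncard_points_le_add_sum (h : IsKConfig X d Xs Ls) (i : Fin s) :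
    (X ∩ (Ls i).points).ncard ≤ d i + ∑ j ∈ Finset.Ioi i, (Xs j ∩ (Ls i).points).ncard := by
  have hsub : X ∩ (Ls i).points ⊆ Xs i ∪ ⋃ j ∈ Finset.Ioi i, Xs j ∩ (Ls i).points := by
    rintro p ⟨hpX, hpi⟩
    obtain ⟨j, hj⟩ := Set.mem_iUnion.1 (h.union_eq ▸ hpX)
    rcases (h.le_of_mem_points hj hpi).eq_or_lt with rfl | hij
    · exact .inl hj
    · exact .inr (Set.mem_biUnion (Finset.mem_Ioi.2 hij) ⟨hj, hpi⟩)
  have hfin : (⋃ j ∈ Finset.Ioi i, Xs j ∩ (Ls i).points).Finite :=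
    (Finset.Ioi i).finite_toSet.biUnion fun j _ ↦ (h.finite j).inter_of_left _
  calc
    _ ≤ (Xs i ∪ ⋃ j ∈ Finset.Ioi i, Xs j ∩ (Ls i).points).ncard :=
      Set.ncard_le_ncard hsub ((h.finite i).union hfin)
    _ ≤ (Xs i).ncard + (⋃ j ∈ Finset.Ioi i, Xs j ∩ (Ls i).points).ncard := Set.ncard_union_le _ _
    _ ≤ _ := by
      rw [h.card_eq]
      gcongr
      exact Finset.set_ncard_biUnion_le _ _

theorem sum_ncard_inter_points_le_card (h : IsKConfig X d Xs Ls) (i : Fin s) :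
    ∑ j ∈ Finset.Ioi i, (Xs j ∩ (Ls i).points).ncard ≤ (Finset.Ioi i).card := by
  rw [Finset.card_eq_sum_ones]
  exact Finset.sum_le_sum fun j hj ↦ h.ncard_inter_points_le_one (Finset.mem_Ioi.1 hj).ne

variable [NeZero s]

theorem ncard_points_le_top (h : IsKConfig X d Xs Ls) (i : Fin s) :
    (X ∩ (Ls i).points).ncard ≤ d ⊤ := by
  linarith [h.ncard_points_le_add_sum i, h.sum_ncard_inter_points_le_card i,
    add_card_Ioi_le_of_strictMono h.strictMono i]

theorem ncard_inter_points_eq_one (h : IsKConfig X d Xs Ls)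
    (hfull : (X ∩ (Ls i).points).ncard = d ⊤) (hij : i < j) :
    (Xs j ∩ (Ls i).points).ncard = 1 := by
  have hsum : ∑ j ∈ Finset.Ioi i, (Xs j ∩ (Ls i).points).ncard = ∑ _j ∈ Finset.Ioi i, 1 := by
    rw [← Finset.card_eq_sum_ones]
    linarith [h.ncard_points_le_add_sum i, h.sum_ncard_inter_points_le_card i,
      add_card_Ioi_le_of_strictMono h.strictMono i]
  exact (Finset.sum_eq_sum_iff_of_le fun j hj ↦
    h.ncard_inter_points_le_one (Finset.mem_Ioi.1 hj).ne).1 hsum j (Finset.mem_Ioi.2 hij)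

theorem eq_add_one_of_covBy (h : IsKConfig X d Xs Ls)
    (hfull : (X ∩ (Ls i).points).ncard = d ⊤) (hik : i ⋖ k) : d k = d i + 1 := by
  have hcard : (Finset.Ioi i).card = (Finset.Ioi k).card + 1 := by
    have hval := Nat.covBy_iff_add_one_eq.1 (Fin.covBy_iff.1 hik)
    rw [Fin.card_Ioi, Fin.card_Ioi]
    omega
  have hlt : d i < d k := h.strictMono hik.lt
  linarith [h.ncard_points_le_add_sum i, h.sum_ncard_inter_points_le_card i,
    add_card_Ioi_le_of_strictMono h.strictMono k]

theorem comp_swap (h : IsKConfig X d Xs Ls) (hfull : (X ∩ (Ls i).points).ncard = d ⊤)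
    (hik : i ⋖ k) :
    IsKConfig X d (residualPoints X (Ls ∘ Equiv.swap i k)) (Ls ∘ Equiv.swap i k) := by
  have hinter := h.ncard_inter_points_eq_one hfull hik.lt
  have hd := h.eq_add_one_of_covBy hfull hik
  refine isKConfig_residualPoints h.one_le h.strictMono
    (h.lines_distinct.comp (Equiv.injective _)) ?_ fun j ↦ ?_
  · simpa only [Function.comp_apply, (Equiv.swap i k).surjective.iUnion_comp
      fun j ↦ (Ls j).points] using h.subset_iUnion_points
  · by_cases hji : j = i
    · subst hji
      rw [residualPoints_comp_swap_left hik, ← h.eq_residualPoints]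
      have := Set.ncard_inter_add_ncard_sdiff_eq_ncard (Xs k) (Ls j).points (h.finite k)
      linarith [h.card_eq k]
    by_cases hjk : j = k
    · subst hjk
      have hdisj : Disjoint (Xs i) (Xs j ∩ (Ls i).points) :=
        Set.disjoint_left.2 fun p hpi hpj ↦ h.not_mem j i hik.lt p hpi (h.subset_line j hpj.1)
      rw [residualPoints_comp_swap_right hik, ← h.eq_residualPoints,
        Set.ncard_union_eq hdisj (h.finite i) ((h.finite j).inter_of_left _), h.card_eq, hinter,
        hd]
    · rw [residualPoints_comp_swap_of_ne hik hji hjk, ← h.eq_residualPoints, h.card_eq]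

-- `Monotone` is for the order `False ≤ True` on `Prop`: the full lines come last.
theorem exists_monotone_ncard_points_eq_top (h : IsKConfig X d Xs Ls) :
    ∃ Xs' Ls', IsKConfig X d Xs' Ls' ∧ Monotone fun i ↦ (X ∩ (Ls' i).points).ncard = d ⊤ := by
  obtain ⟨σ, hσ, hmono⟩ := exists_perm_monotone_comp_of_swap_covBy
    (f := fun i ↦ (X ∩ (Ls i).points).ncard = d ⊤)
    (P := fun σ ↦ IsKConfig X d (residualPoints X (Ls ∘ σ)) (Ls ∘ σ))
    (h.eq_residualPoints ▸ h) fun σ i k hik hlt hσ ↦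
      hσ.comp_swap (Classical.not_imp.1 hlt.not_ge).1 hik
  exact ⟨_, _, hσ, hmono⟩

end IsKConfig

theorem kconfig_relabel_cor_general {K : Type} [Field K] {s : ℕ} (hs : 0 < s)
    (X : Set (P2 K)) (d : Fin s → ℕ) (Xs : Fin s → Set (P2 K)) (Ls : Fin s → ProjLine K)
    (hX : IsKConfig X d Xs Ls) (ds : ℕ) (hds : ds = d ⟨s - 1, by omega⟩) :
    ∃ (Xs' : Fin s → Set (P2 K)) (Ls' : Fin s → ProjLine K) (r : ℕ),
      r ≤ s ∧ IsKConfig X d Xs' Ls' ∧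
      (∀ j : ℕ, j < r → (X ∩ (Ls' ⟨s - 1 - j, by omega⟩).points).ncard = ds) ∧
      (∀ j : ℕ, r ≤ j → j ≤ s - 1 →
        (X ∩ (Ls' ⟨s - 1 - j, by omega⟩).points).ncard < ds) := by
  have : NeZero s := ⟨hs.ne'⟩
  have hrev (j : ℕ) (hj : j < s) : (⟨s - 1 - j, by omega⟩ : Fin s) = Fin.rev ⟨j, hj⟩ := by
    simp only [Fin.rev, Nat.sub_sub, add_comm 1 j]
  obtain rfl : ds = d ⊤ :=
    hds.trans (congrArg d (isTop_iff_eq_top.1 fun i ↦ Nat.le_pred_of_lt i.isLt))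
  obtain ⟨Xs', Ls', h, hmono⟩ := hX.exists_monotone_ncard_points_eq_top
  obtain ⟨r, hr, hfull⟩ := exists_le_forall_iff_lt_of_antitone
    (hmono.comp_antitone Fin.rev_anti)
  refine ⟨Xs', Ls', r, hr, h, fun j hjr ↦ ?_, fun j hrj hj ↦ ?_⟩
  · rw [hrev j (hjr.trans_le hr)]
    exact (hfull _).2 hjr
  · rw [hrev j (by omega)]
    exact (h.ncard_points_le_top _).lt_of_ne (mt (hfull _).1 hrj.not_gt)

/-- **Corollary (relabelling).** Let `X` be a k-configuration of type
`(d₁,…,d_s)`, `s ≥ 2`. After relabelling, we may assume there is an `r` such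
that the last `r` defining lines each contain exactly `d_s` points of `X`,
while the remaining defining lines contain fewer than `d_s` points of `X`. -/
theorem kconfig_relabel_cor {K : Type} [Field K] [IsAlgClosed K] {s : ℕ} (hs : 2 ≤ s)
    (X : Set (P2 K)) (d : Fin s → ℕ) (Xs : Fin s → Set (P2 K)) (Ls : Fin s → ProjLine K)
    (hX : IsKConfig X d Xs Ls)
    (ds : ℕ) (hds : ds = d ⟨s - 1, by omega⟩) :
    ∃ (Xs' : Fin s → Set (P2 K)) (Ls' : Fin s → ProjLine K) (r : ℕ),
      r ≤ s ∧ IsKConfig X d Xs' Ls' ∧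
      (∀ j : ℕ, j < r → (X ∩ (Ls' ⟨s - 1 - j, by omega⟩).points).ncard = ds) ∧
      (∀ j : ℕ, r ≤ j → j ≤ s - 1 →
        (X ∩ (Ls' ⟨s - 1 - j, by omega⟩).points).ncard < ds) :=
  kconfig_relabel_cor_general (by omega) X d Xs Ls hX ds hds
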